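/- Full abstraction of HOCRWL semantics with respect to Obs: for any program P without extra variables and any expressions e, e', one has ⟦e⟧^P = ⟦e'⟧^P if and only if Obs^{P'}(C[e]) = Obs^{P'}(C[e']) for every program P' safely extending both (P, e) and (P, e') and every context C built with the signature of P'. -/

import Mathlib

/-!
Write `e ⇒ t` for derivability.  The proof rests on three facts.

* *Compositionality.*  For a well-formed program, `den P (e₁ e₂)` depends monotonically on
  `den P e₁` and `den P e₂` only (`den_app_mono`).  Every derivation of `e₁ e₂ ⇒ s` factors through
  patterns `t₁ ∈ den P e₁` and `t₂ ∈ den P e₂`, and conversely patterns of the denotation may be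
  replaced by the expressions they come from.  The latter uses transitivity `e ⇒ t ⇒ s` through a
  pattern `t` (`Deriv.trans`): patterns are not redexes, because every rule for `f` consumes
  `arityF f` arguments while a pattern headed by `f` carries fewer.
* *Conservativity.*  If `P'` safely extends `(P, e)`, then `den P' (ι e)` is the image of
  `den P e` (`den_map`): the absence of extra variables keeps every expression in a derivation
  inside the original signature and away from the function symbols defined by the new rules.
* *Separation.*  Given a pattern `t` in the denotation of `e`, rename all its leaves (variables and
  `⊥`) apart to get a linear total pattern `t'`, and add a rule `f t' → d y₁ … yₙ`, where `f` and `d`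
  are fresh and the `yᵢ` are the new names of the variable leaves of `t`.  Then `f e'` evaluates
  to the total pattern `d x₁ … xₙ`, listing the variable occurrences of `t`, exactly if `e' ⇒ t`.

The first two facts give the forward implication, the third the converse.
-/


/-- A signature: function symbols and constructor symbols, each with an arity. -/
structure Sig where
  FS : Type
  CS : Type
  arityF : FS → ℕ
  arityC : CS → ℕ

/-- Applicative partial expressions over a signature.  Variables are natural
numbers and `bot` is the distinguished 0-ary constructor `⊥`. -/
inductive Exp (σ : Sig) : Type where
  | var : ℕ → Exp σ
  | fn : σ.FS → Exp σ
  | cn : σ.CS → Exp σ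
  | bot : Exp σ
  | app : Exp σ → Exp σ → Exp σ

variable {σ : Sig}

/-- `applyList e [e1, …, en]` is the curried application `e e1 … en`. -/
def applyList (e : Exp σ) (es : List (Exp σ)) : Exp σ := es.foldl Exp.app e

/-- Partial patterns `Pat_⊥`. -/
inductive IsPPat : Exp σ → Prop where
  | var (x : ℕ) : IsPPat (Exp.var x)
  | bot : IsPPat (Exp.bot : Exp σ)
  | capp (c : σ.CS) (ts : List (Exp σ)) (har : ts.length ≤ σ.arityC c)
      (hts : ∀ t ∈ ts, IsPPat t) : IsPPat (applyList (Exp.cn c) ts)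
  | fapp (f : σ.FS) (ts : List (Exp σ)) (har : ts.length < σ.arityF f)
      (hts : ∀ t ∈ ts, IsPPat t) : IsPPat (applyList (Exp.fn f) ts)

/-- The constructor `⊥` does not occur in the expression. -/
def BotFree : Exp σ → Prop
  | .bot => False
  | .app a b => BotFree a ∧ BotFree b
  | _ => True

/-- Total patterns `Pat`. -/
def IsPat (t : Exp σ) : Prop := IsPPat t ∧ BotFree t

/-- First-order patterns `FOPat`. -/
inductive IsFOPat : Exp σ → Prop where
  | var (x : ℕ) : IsFOPat (Exp.var x)
  | capp (c : σ.CS) (ts : List (Exp σ)) (har : ts.length = σ.arityC c)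
      (hts : ∀ t ∈ ts, IsFOPat t) : IsFOPat (applyList (Exp.cn c) ts)

/-- The list of occurrences of variables in an expression. -/
def occVars : Exp σ → List ℕ
  | .var x => [x]
  | .app a b => occVars a ++ occVars b
  | _ => []

/-- Applying a substitution to an expression. -/
def subst (θ : ℕ → Exp σ) : Exp σ → Exp σ
  | .var x => θ x
  | .fn f => .fn f
  | .cn c => .cn c
  | .bot => .bot
  | .app a b => .app (subst θ a) (subst θ b)

/-- Partial-pattern substitutions `PSubst_⊥`. -/
def PSub (θ : ℕ → Exp σ) : Prop := ∀ x, IsPPat (θ x)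

/-- A program rule `f t1 … tn → r` (the left-hand side is `f` applied to `lhs`). -/
structure Rule (σ : Sig) where
  fn : σ.FS
  lhs : List (Exp σ)
  rhs : Exp σ

/-- Well-formedness of a rule: `f` is applied to as many arguments as its arity,
the arguments form a linear tuple of total patterns. -/
def Rule.WF (r : Rule σ) : Prop :=
  r.lhs.length = σ.arityF r.fn ∧ (∀ t ∈ r.lhs, IsPat t) ∧
    (r.lhs.flatMap occVars).Nodup

/-- The rule has no extra variables: all variables of the right-hand side occur
in the left-hand side. -/
def Rule.NoExtra (r : Rule σ) : Prop :=
  ∀ x ∈ occVars r.rhs, x ∈ r.lhs.flatMap occVars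

abbrev Program (σ : Sig) := Set (Rule σ)

/-- A program without extra variables, all whose rules are well formed. -/
def WFProg (P : Program σ) : Prop := ∀ r ∈ P, r.WF ∧ r.NoExtra

/-- `h ∈ Σ` (a function symbol, a constructor symbol, or `⊥`). -/
def IsSymb : Exp σ → Prop
  | .fn _ => True
  | .cn _ => True
  | .bot => True
  | _ => False

/-- HOCRWL derivation trees for statements `e ⇒ t`, with rules
(B), (RR), (DC) and (OR). -/
inductive DTree (P : Program σ) : Exp σ → Exp σ → Type where
  | bot (e : Exp σ) : DTree P e Exp.bot
  | rr (x : ℕ) : DTree P (Exp.var x) (Exp.var x)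
  | dc (h : Exp σ) (es ts : List (Exp σ)) (hsym : IsSymb h)
      (hlen : es.length = ts.length) (hpat : IsPPat (applyList h ts))
      (ds : ∀ p ∈ es.zip ts, DTree P p.1 p.2) :
      DTree P (applyList h es) (applyList h ts)
  | opr (r : Rule σ) (hr : r ∈ P) (θ : ℕ → Exp σ) (hθ : PSub θ)
      (es as : List (Exp σ)) (t : Exp σ) (hlen : es.length = r.lhs.length)
      (ds : ∀ p ∈ es.zip (r.lhs.map (subst θ)), DTree P p.1 p.2)
      (d : DTree P (applyList (subst θ r.rhs) as) t) :
      DTree P (applyList (Exp.fn r.fn) (es ++ as)) t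

/-- `P ⊢ e ⇒ t` is derivable in the HOCRWL proof calculus. -/
def Deriv (P : Program σ) (e t : Exp σ) : Prop := Nonempty (DTree P e t)

/-- The HOCRWL denotation `⟦e⟧^P = { t ∈ Pat_⊥ | P ⊢ e ⇒ t }`. -/
def den (P : Program σ) (e : Exp σ) : Set (Exp σ) := {t | IsPPat t ∧ Deriv P e t}

/-- Observations: total patterns in the denotation. -/
def Obs (P : Program σ) (e : Exp σ) : Set (Exp σ) := {t | t ∈ den P e ∧ BotFree t}

/-- First-order observations: first-order patterns in the denotation. -/
def ObsFO (P : Program σ) (e : Exp σ) : Set (Exp σ) := {t | t ∈ den P e ∧ IsFOPat t}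

/-- Contexts `C ::= [ ] | C e | e C`. -/
inductive Cntxt (σ : Sig) : Type where
  | hole : Cntxt σ
  | appL : Cntxt σ → Exp σ → Cntxt σ
  | appR : Exp σ → Cntxt σ → Cntxt σ

/-- Filling the hole of a context with an expression. -/
def Cntxt.fill : Cntxt σ → Exp σ → Exp σ
  | .hole, e => e
  | .appL C e', e => .app (C.fill e) e'
  | .appR e' C, e => .app e' (C.fill e)

/-- Function symbols occurring in an expression. -/
def expFS : Exp σ → Set σ.FS
  | .fn f => {f}
  | .app a b => expFS a ∪ expFS b
  | _ => ∅

/-- Function symbols occurring in a rule. -/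
def ruleFS (r : Rule σ) : Set σ.FS :=
  insert r.fn ((⋃ t ∈ r.lhs, expFS t) ∪ expFS r.rhs)

/-- Function symbols occurring in a program. -/
def progFS (P : Program σ) : Set σ.FS := ⋃ r ∈ P, ruleFS r

/-- Function symbols defined by a program (roots of left-hand sides). -/
def defs (P : Program σ) : Set σ.FS := Rule.fn '' P

/-- `P'` is a safe extension of `(P, e)`: `P' = P ⊎ P''` where `P''` defines no
function symbol occurring in `P` or in `e`. -/
def SafeExt (P P' : Program σ) (e : Exp σ) : Prop :=
  ∃ P'' : Program σ, P' = P ∪ P'' ∧ Disjoint P P'' ∧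
    Disjoint (defs P'') (expFS e ∪ progFS P)

/-- `e ∼ₙ e'` : `n`-extensional equivalence. -/
def ExtEquiv (P : Program σ) (n : ℕ) (e e' : Exp σ) : Prop :=
  ∀ es : List (Exp σ), es.length = n →
    den P (applyList e es) = den P (applyList e' es)

/-- An (injective, arity-preserving) extension of signatures, embedding the
signature of `P` into a possibly larger signature providing fresh auxiliary
symbols. -/
structure SigHom (σ τ : Sig) where
  onF : σ.FS → τ.FS
  onC : σ.CS → τ.CS
  injF : Function.Injective onF
  injC : Function.Injective onC
  arF : ∀ f, τ.arityF (onF f) = σ.arityF f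
  arC : ∀ c, τ.arityC (onC c) = σ.arityC c

def SigHom.mapExp {σ τ : Sig} (ι : SigHom σ τ) : Exp σ → Exp τ
  | .var x => .var x
  | .fn f => .fn (ι.onF f)
  | .cn c => .cn (ι.onC c)
  | .bot => .bot
  | .app a b => .app (ι.mapExp a) (ι.mapExp b)

def SigHom.mapRule {σ τ : Sig} (ι : SigHom σ τ) (r : Rule σ) : Rule τ :=
  ⟨ι.onF r.fn, r.lhs.map ι.mapExp, ι.mapExp r.rhs⟩

def SigHom.mapProg {σ τ : Sig} (ι : SigHom σ τ) (P : Program σ) : Program τ :=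
  ι.mapRule '' P

/-! ### Spines and patterns -/

@[simp] theorem applyList_nil (e : Exp σ) : applyList e [] = e := rfl

@[simp] theorem applyList_snoc (e : Exp σ) (es : List (Exp σ)) (b : Exp σ) :
    applyList e (es ++ [b]) = .app (applyList e es) b := by
  simp [applyList]

theorem applyList_append (e : Exp σ) (es as : List (Exp σ)) :
    applyList e (es ++ as) = applyList (applyList e es) as := by
  simp [applyList]

theorem applyList_eq_app {h a b : Exp σ} {es : List (Exp σ)} (hs : IsSymb h)
    (H : applyList h es = .app a b) : ∃ es₀, es = es₀ ++ [b] ∧ applyList h es₀ = a := by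
  induction es using List.reverseRecOn with
  | nil => subst H; exact hs.elim
  | append_singleton es x _ =>
    simp only [applyList_snoc, Exp.app.injEq] at H
    exact ⟨es, by rw [H.2], H.1⟩

theorem applyList_inj {h h' : Exp σ} {es es' : List (Exp σ)} (hs : IsSymb h) (hs' : IsSymb h')
    (H : applyList h es = applyList h' es') : h = h' ∧ es = es' := by
  induction es using List.reverseRecOn generalizing es' with
  | nil =>
    induction es' using List.reverseRecOn with
    | nil => exact ⟨H, rfl⟩
    | append_singleton es x _ =>
      simp only [applyList_snoc, applyList_nil] at H
      subst H; exact hs.elim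
  | append_singleton es x ih =>
    rw [applyList_snoc] at H
    obtain ⟨es₀, rfl, h2⟩ := applyList_eq_app hs' H.symm
    obtain ⟨rfl, rfl⟩ := ih h2.symm
    exact ⟨rfl, rfl⟩

theorem applyList_ne_var {h : Exp σ} {es : List (Exp σ)} (hs : IsSymb h) (x : ℕ) :
    applyList h es ≠ .var x := by
  induction es using List.reverseRecOn with
  | nil => intro H; simp at H; subst H; exact hs.elim
  | append_singleton es x _ => simp

/-- `PatAr e n`: the expression `e` is a partial pattern that remains one when applied to up to `n`
further patterns (for a variable or `⊥` only `n = 0` is recorded).  This describes partial patterns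
by recursion on binary application instead of on spines. -/
inductive PatAr : Exp σ → ℕ → Prop where
  | var (x : ℕ) : PatAr (.var x) 0
  | bot : PatAr .bot 0
  | cn (c : σ.CS) : PatAr (.cn c) (σ.arityC c)
  | fn (f : σ.FS) (n : ℕ) (h : n + 1 = σ.arityF f) : PatAr (.fn f) n
  | app (a b : Exp σ) (n m : ℕ) (ha : PatAr a (n + 1)) (hb : PatAr b m) : PatAr (.app a b) n

theorem patAr_applyList {h : Exp σ} {n : ℕ} (hh : PatAr h n) (ts : List (Exp σ))
    (hl : ts.length ≤ n) (hts : ∀ t ∈ ts, ∃ m, PatAr t m) :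
    PatAr (applyList h ts) (n - ts.length) := by
  induction ts using List.reverseRecOn with
  | nil => simpa using hh
  | append_singleton ts x ih =>
    simp only [List.length_append, List.length_cons, List.length_nil] at hl
    obtain ⟨m, hm⟩ := hts x (by simp)
    rw [applyList_snoc]
    refine PatAr.app _ _ _ m ?_ hm
    have := ih (by omega) (fun t ht => hts t (by simp [ht]))
    convert this using 1
    simp; omega

theorem IsPPat.patAr {t : Exp σ} (h : IsPPat t) : ∃ n, PatAr t n := by
  induction h with
  | var x => exact ⟨_, .var x⟩
  | bot => exact ⟨_, .bot⟩
  | capp c ts har _ ih => exact ⟨_, patAr_applyList (.cn c) ts har ih⟩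
  | fapp f ts har _ ih =>
    exact ⟨_, patAr_applyList (.fn f (σ.arityF f - 1) (by omega)) ts (by omega) ih⟩

theorem PatAr.spine {t : Exp σ} {n : ℕ} (h : PatAr t n) :
    ((∃ x, t = .var x) ∧ n = 0) ∨ (t = .bot ∧ n = 0) ∨
    (∃ c ts, t = applyList (.cn c) ts ∧ ts.length + n = σ.arityC c ∧ ∀ u ∈ ts, IsPPat u) ∨
    (∃ f ts, t = applyList (.fn f) ts ∧ ts.length + n + 1 = σ.arityF f ∧ ∀ u ∈ ts, IsPPat u) := by
  induction h with
  | var x => simp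
  | bot => simp
  | cn c => exact .inr (.inr (.inl ⟨c, [], by simp⟩))
  | fn f n h => exact .inr (.inr (.inr ⟨f, [], by simpa using h⟩))
  | app a b n m _ _ iha ihb =>
    have hb : IsPPat b := by
      rcases ihb with ⟨⟨x, rfl⟩, -⟩ | ⟨rfl, -⟩ | ⟨c, ts, rfl, h1, h2⟩ | ⟨c, ts, rfl, h1, h2⟩
      · exact .var x
      · exact .bot
      · exact .capp _ _ (by omega) h2
      · exact .fapp _ _ (by omega) h2
    rcases iha with ⟨-, h⟩ | ⟨-, h⟩ | ⟨c, ts, rfl, h1, h2⟩ | ⟨c, ts, rfl, h1, h2⟩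
    · omega
    · omega
    · refine .inr (.inr (.inl ⟨c, ts ++ [b], by simp, by simp; omega, ?_⟩))
      simp only [List.mem_append, List.mem_singleton]
      rintro u (hu | rfl)
      exacts [h2 u hu, hb]
    · refine .inr (.inr (.inr ⟨c, ts ++ [b], by simp, by simp; omega, ?_⟩))
      simp only [List.mem_append, List.mem_singleton]
      rintro u (hu | rfl)
      exacts [h2 u hu, hb]

theorem isPPat_iff {t : Exp σ} : IsPPat t ↔ ∃ n, PatAr t n := by
  refine ⟨IsPPat.patAr, ?_⟩
  rintro ⟨n, h⟩
  rcases h.spine with ⟨⟨x, rfl⟩, -⟩ | ⟨rfl, -⟩ | ⟨c, ts, rfl, h1, h2⟩ | ⟨c, ts, rfl, h1, h2⟩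
  · exact .var x
  · exact .bot
  · exact .capp _ _ (by omega) h2
  · exact .fapp _ _ (by omega) h2

theorem IsPPat.left {a b : Exp σ} (h : IsPPat (.app a b)) : IsPPat a := by
  obtain ⟨n, h⟩ := isPPat_iff.1 h
  cases h with
  | app _ _ n m ha hb => exact isPPat_iff.2 ⟨_, ha⟩

/-- A pattern headed by `f` has fewer arguments than the arity of `f`. -/
theorem IsPPat.length_lt {f : σ.FS} {ts : List (Exp σ)} (h : IsPPat (applyList (.fn f) ts)) :
    ts.length < σ.arityF f := by
  obtain ⟨n, h⟩ := isPPat_iff.1 h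
  have hs : IsSymb (Exp.fn f) := trivial
  rcases h.spine with ⟨⟨x, h0⟩, -⟩ | ⟨h0, -⟩ | ⟨c, ts', h0, h1, h2⟩ | ⟨g, ts', h0, h1, h2⟩
  · exact absurd h0 (applyList_ne_var hs x)
  · cases (applyList_inj hs (h' := .bot) (es' := []) trivial h0).1
  · cases (applyList_inj hs (h' := .cn c) trivial h0).1
  · obtain ⟨h3, rfl⟩ := applyList_inj hs (h' := .fn g) trivial h0
    cases h3; omega

/-! ### The calculus -/

section Calculus

variable {P : Program σ}

theorem Deriv.bot (e : Exp σ) : Deriv P e .bot := ⟨.bot e⟩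

theorem Deriv.rr (x : ℕ) : Deriv P (.var x) (.var x) := ⟨.rr x⟩

theorem Deriv.dc {h : Exp σ} {es ts : List (Exp σ)} (hs : IsSymb h)
    (hp : IsPPat (applyList h ts)) (H : List.Forall₂ (Deriv P) es ts) :
    Deriv P (applyList h es) (applyList h ts) :=
  ⟨.dc h es ts hs H.length_eq hp
    fun _ hq => ((List.forall₂_iff_zip.1 H).2 hq).some⟩

theorem Deriv.opr {r : Rule σ} (hr : r ∈ P) {θ : ℕ → Exp σ} (hθ : PSub θ)
    {es as : List (Exp σ)} {t : Exp σ} (H : List.Forall₂ (Deriv P) es (r.lhs.map (subst θ)))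
    (d : Deriv P (applyList (subst θ r.rhs) as) t) :
    Deriv P (applyList (.fn r.fn) (es ++ as)) t :=
  ⟨.opr r hr θ hθ es as t (by simpa using H.length_eq)
    (fun _ hq => ((List.forall₂_iff_zip.1 H).2 hq).some) d.some⟩

/-- Rule induction for `Deriv`, with premises on argument lists in `List.Forall₂` form. -/
theorem Deriv.ind {M : Exp σ → Exp σ → Prop}
    (hbot : ∀ e, M e .bot) (hrr : ∀ x, M (.var x) (.var x))
    (hdc : ∀ h es ts, IsSymb h → IsPPat (applyList h ts) →
      List.Forall₂ (fun a b => Deriv P a b ∧ M a b) es ts → M (applyList h es) (applyList h ts))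
    (hopr : ∀ r ∈ P, ∀ θ, PSub θ → ∀ es as t,
      List.Forall₂ (fun a b => Deriv P a b ∧ M a b) es (r.lhs.map (subst θ)) →
      Deriv P (applyList (subst θ r.rhs) as) t → M (applyList (subst θ r.rhs) as) t →
      M (applyList (.fn r.fn) (es ++ as)) t)
    {e t : Exp σ} (d : Deriv P e t) : M e t := by
  obtain ⟨d⟩ := d
  induction d with
  | bot e => exact hbot e
  | rr x => exact hrr x
  | dc h es ts hs hl hp ds ih =>
    exact hdc h es ts hs hp (List.forall₂_iff_zip.2 ⟨hl, fun hq => ⟨⟨ds _ hq⟩, ih _ hq⟩⟩)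
  | opr r hr θ hθ es as t hl ds d ih ihd =>
    exact hopr r hr θ hθ es as t
      (List.forall₂_iff_zip.2 ⟨by simpa using hl, fun hq => ⟨⟨ds _ hq⟩, ih _ hq⟩⟩) ⟨d⟩ ihd

theorem Deriv.inv {e t : Exp σ} (d : Deriv P e t) :
    t = .bot ∨ (∃ x, e = .var x ∧ t = .var x) ∨
    (∃ h es ts, e = applyList h es ∧ t = applyList h ts ∧ IsSymb h ∧
      IsPPat (applyList h ts) ∧ List.Forall₂ (Deriv P) es ts) ∨
    (∃ r ∈ P, ∃ θ es as, e = applyList (.fn r.fn) (es ++ as) ∧ PSub θ ∧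
      List.Forall₂ (Deriv P) es (r.lhs.map (subst θ)) ∧
      Deriv P (applyList (subst θ r.rhs) as) t) := by
  refine Deriv.ind (M := fun e t => t = .bot ∨ (∃ x, e = .var x ∧ t = .var x) ∨
    (∃ h es ts, e = applyList h es ∧ t = applyList h ts ∧ IsSymb h ∧
      IsPPat (applyList h ts) ∧ List.Forall₂ (Deriv P) es ts) ∨
    (∃ r ∈ P, ∃ θ es as, e = applyList (.fn r.fn) (es ++ as) ∧ PSub θ ∧
      List.Forall₂ (Deriv P) es (r.lhs.map (subst θ)) ∧
      Deriv P (applyList (subst θ r.rhs) as) t)) ?_ ?_ ?_ ?_ d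
  · intro e; exact .inl rfl
  · intro x; exact .inr (.inl ⟨x, rfl, rfl⟩)
  · intro h es ts hs hp H
    exact .inr (.inr (.inl ⟨h, es, ts, rfl, rfl, hs, hp, H.imp fun _ _ h => h.1⟩))
  · intro r hr θ hθ es as t H d _
    exact .inr (.inr (.inr ⟨r, hr, θ, es, as, rfl, hθ, H.imp fun _ _ h => h.1, d⟩))

/-- Only partial patterns are derivable. -/
theorem Deriv.isPPat {e t : Exp σ} (d : Deriv P e t) : IsPPat t :=
  Deriv.ind (M := fun _ t => IsPPat t) (fun _ => .bot) (fun x => .var x)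
    (fun _ _ _ _ hp _ => hp) (fun _ _ _ _ _ _ _ _ _ h => h) d

theorem mem_den {e t : Exp σ} : t ∈ den P e ↔ Deriv P e t :=
  ⟨fun h => h.2, fun h => ⟨h.isPPat, h⟩⟩

theorem Deriv.refl {t : Exp σ} (h : IsPPat t) : Deriv P t t := by
  induction h with
  | var x => exact .rr x
  | bot => exact .bot _
  | capp c ts har hts ih =>
    exact .dc trivial (.capp c ts har hts) (List.forall₂_same.2 ih)
  | fapp f ts har hts ih =>
    exact .dc trivial (.fapp f ts har hts) (List.forall₂_same.2 ih)

theorem Deriv.eq_bot {t : Exp σ} (d : Deriv P .bot t) : t = .bot := by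
  rcases d.inv with h | ⟨x, h, -⟩ | ⟨h, es, ts, h0, rfl, hs, hp, H⟩ |
    ⟨r, hr, θ, es, as, h0, -⟩
  · exact h
  · cases h
  · obtain ⟨rfl, rfl⟩ := applyList_inj (h := .bot) (es := []) trivial hs h0
    cases H; rfl
  · cases (applyList_inj (h := .bot) (es := []) (h' := .fn r.fn) trivial trivial h0).1

/-- A pattern is not a redex: no rule consumes so few arguments. -/
theorem not_redex (hP : WFProg P) {r : Rule σ} (hr : r ∈ P) {θ : ℕ → Exp σ}
    {es as : List (Exp σ)} (H : List.Forall₂ (Deriv P) es (r.lhs.map (subst θ)))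
    (h : IsPPat (applyList (.fn r.fn) (es ++ as))) : False := by
  have h1 := h.length_lt
  have h2 := (hP r hr).1.1
  have h3 := H.length_eq
  simp at h1 h3
  omega

theorem Deriv.pat_dc (hP : WFProg P) {h : Exp σ} {ts : List (Exp σ)} {s : Exp σ} (hs : IsSymb h)
    (hp : IsPPat (applyList h ts)) (d : Deriv P (applyList h ts) s) :
    s = .bot ∨ ∃ ss, s = applyList h ss ∧ List.Forall₂ (Deriv P) ts ss := by
  rcases d.inv with h0 | ⟨x, h0, -⟩ | ⟨h', es, ts', h0, rfl, hs', hp', H⟩ |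
    ⟨r, hr, θ, es, as, h0, hθ, H, -⟩
  · exact .inl h0
  · exact absurd h0 (applyList_ne_var hs x)
  · obtain ⟨rfl, rfl⟩ := applyList_inj hs hs' h0
    exact .inr ⟨ts', rfl, H⟩
  · rw [h0] at hp
    exact (not_redex hP hr H hp).elim

theorem forall₂_trans {α : Type*} {R : α → α → Prop} {as bs cs : List α}
    (h : List.Forall₂ (fun a b => ∀ c, R b c → R a c) as bs) (h' : List.Forall₂ R bs cs) :
    List.Forall₂ R as cs := by
  induction h generalizing cs with
  | nil => cases h'; exact .nil
  | cons h1 _ ih => cases h' with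
    | cons h2 h3 => exact .cons (h1 _ h2) (ih h3)

/-- Whatever is derivable from a derived pattern is derivable: the second derivation can only
truncate the pattern. -/
theorem Deriv.trans (hP : WFProg P) {e t s : Exp σ} (d : Deriv P e t) (d' : Deriv P t s) :
    Deriv P e s := by
  refine Deriv.ind (M := fun e t => ∀ s, Deriv P t s → Deriv P e s) ?_ ?_ ?_ ?_ d s d'
  · intro e s d; rw [d.eq_bot]; exact .bot e
  · intro x s d; exact d
  · intro h es ts hs hp H s d
    rcases d.pat_dc hP hs hp with rfl | ⟨ss, rfl, H'⟩
    · exact .bot _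
    · exact .dc hs d.isPPat (forall₂_trans (H.imp fun _ _ h => h.2) H')
  · intro r hr θ hθ es as t H _ ih s d
    exact .opr hr hθ (H.imp fun _ _ h => h.1) (ih s d)

theorem forall₂_trans' (hP : WFProg P) {as bs cs : List (Exp σ)}
    (h : List.Forall₂ (Deriv P) as bs) (h' : List.Forall₂ (Deriv P) bs cs) :
    List.Forall₂ (Deriv P) as cs :=
  forall₂_trans (h.imp fun _ _ h c h' => Deriv.trans (s := c) hP h h') h'

theorem forall₂_snoc_left {α β : Type*} {R : α → β → Prop} {as : List α} {a : α} {bs : List β}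
    (h : List.Forall₂ R (as ++ [a]) bs) :
    ∃ bs' b, bs = bs' ++ [b] ∧ List.Forall₂ R as bs' ∧ R a b := by
  induction as generalizing bs with
  | nil =>
    cases h with
    | cons h1 h2 => cases h2; exact ⟨[], _, rfl, .nil, h1⟩
  | cons c as ih =>
    cases h with
    | cons h1 h2 =>
      obtain ⟨bs, b, rfl, h3, h4⟩ := ih h2
      exact ⟨_ :: bs, b, rfl, .cons h1 h3, h4⟩

theorem forall₂_snoc {α β : Type*} {R : α → β → Prop} {as : List α} {a : α} {bs : List β} {b : β}
    (h : List.Forall₂ R as bs) (h' : R a b) : List.Forall₂ R (as ++ [a]) (bs ++ [b]) :=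
  List.rel_append h (.cons h' .nil)

theorem forall₂_pat_refl {as bs : List (Exp σ)} (h : List.Forall₂ (Deriv P) as bs) :
    List.Forall₂ (Deriv P) bs bs := by
  induction h with
  | nil => exact .nil
  | cons h _ ih => exact .cons (.refl h.isPPat) ih

/-! ### Compositionality -/

/-- An application only uses patterns of its two components. -/
theorem Deriv.app_split (hP : WFProg P) {a b s : Exp σ} (d : Deriv P (.app a b) s) :
    ∃ t u, Deriv P a t ∧ Deriv P b u ∧ Deriv P (.app t u) s := by
  refine Deriv.ind (M := fun e s => ∀ a b, e = .app a b →
    ∃ t u, Deriv P a t ∧ Deriv P b u ∧ Deriv P (.app t u) s) ?_ ?_ ?_ ?_ d a b rfl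
  · intro e a b _
    exact ⟨.bot, .bot, .bot _, .bot _, .bot _⟩
  · intro x a b h; cases h
  · intro h es ts hs hp H a b h0
    obtain ⟨es, rfl, rfl⟩ := applyList_eq_app hs h0
    obtain ⟨ts, u, rfl, H1, H2⟩ := forall₂_snoc_left (H.imp fun _ _ h => h.1)
    have hp' := hp
    rw [applyList_snoc] at hp
    refine ⟨applyList h ts, u, .dc hs hp.left H1, H2, ?_⟩
    rw [← applyList_snoc]
    exact .dc hs hp' (forall₂_snoc (forall₂_pat_refl H1) (.refl H2.isPPat))
  · intro r hr θ hθ es as s H d ih a b h0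
    replace H := H.imp fun _ _ h => h.1
    obtain ⟨cs, h1, rfl⟩ := applyList_eq_app (h := .fn r.fn) trivial h0
    rcases List.eq_nil_or_concat as with rfl | ⟨as, c, rfl⟩
    · rw [List.append_nil] at h1
      subst h1
      obtain ⟨ts, u, hts, H1, H2⟩ := forall₂_snoc_left H
      have hlen : ts.length < σ.arityF r.fn := by
        have h2 := (hP r hr).1.1
        have h3 := congrArg List.length hts
        simp at h3
        omega
      refine ⟨applyList (.fn r.fn) ts, u, .dc trivial (.fapp _ _ hlen ?_) H1, H2, ?_⟩
      · intro t ht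
        obtain ⟨i, hi, rfl⟩ := List.getElem_of_mem ht
        exact (List.Forall₂.get H1 (by rw [H1.length_eq]; exact hi) hi).isPPat
      · rw [← applyList_snoc, ← List.append_nil (ts ++ [u])]
        refine .opr hr hθ ?_ d
        rw [hts]
        exact forall₂_snoc (forall₂_pat_refl H1) (.refl H2.isPPat)
    · rw [List.concat_eq_append, ← List.append_assoc] at h1
      obtain ⟨rfl, h3⟩ := List.append_inj' h1 rfl
      cases h3
      obtain ⟨t, u, ht, hu, d'⟩ := ih (applyList (subst θ r.rhs) as) b (by simp)
      exact ⟨t, u, .opr hr hθ H ht, hu, d'⟩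

theorem Deriv.app_left (hP : WFProg P) {a b t s : Exp σ} (d : Deriv P a t)
    (d' : Deriv P (.app t b) s) : Deriv P (.app a b) s := by
  refine Deriv.ind (M := fun a t => ∀ s, Deriv P (.app t b) s → Deriv P (.app a b) s)
    ?_ ?_ ?_ ?_ d s d'
  · intro e s d
    rcases d.inv with rfl | ⟨x, h0, -⟩ | ⟨h, es, ts, h0, rfl, hs, hp, H⟩ |
      ⟨r, hr, θ, es, as, h0, -⟩
    · exact .bot _
    · cases h0
    · -- `⊥ b` is no pattern, so the only spine headed by `⊥` in a pattern is `⊥` itself.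
      obtain ⟨es, rfl, h1⟩ := applyList_eq_app hs h0.symm
      obtain ⟨rfl, rfl⟩ := applyList_inj (h' := .bot) (es' := []) hs trivial h1
      obtain ⟨ts, u, rfl, H1, H2⟩ := forall₂_snoc_left H
      cases H1
      obtain ⟨n, hp⟩ := isPPat_iff.1 hp
      cases hp with
      | app _ _ n m h1 h2 => cases h1
    · obtain ⟨es, h2, h1⟩ := applyList_eq_app (h := .fn r.fn) trivial h0.symm
      cases (applyList_inj (h := .fn r.fn) (h' := .bot) (es' := []) trivial trivial h1).1
  · intro x s d; exact d
  · intro h es ts hs hp H s d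
    replace H := H.imp fun _ _ h => h.1
    rw [← applyList_snoc] at d ⊢
    rcases d.inv with rfl | ⟨x, h0, -⟩ | ⟨h', es', ts', h0, rfl, hs', hp', H'⟩ |
      ⟨r, hr, θ, es', as, h0, hθ, H', d'⟩
    · exact .bot _
    · exact absurd h0 (applyList_ne_var hs x)
    · obtain ⟨rfl, rfl⟩ := applyList_inj hs hs' h0
      obtain ⟨ts', u, rfl, H1, H2⟩ := forall₂_snoc_left H'
      exact .dc hs hp' (forall₂_snoc (forall₂_trans' hP H H1) H2)
    · obtain ⟨rfl, h1⟩ := applyList_inj hs (h' := .fn r.fn) trivial h0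
      -- The pattern has fewer arguments than the arity, so the rule consumes `b` as well.
      have has : as = [] := by
        have h2 := (hP r hr).1.1
        have h3 := H'.length_eq
        have h4 := hp.length_lt
        have h5 := congrArg List.length h1
        simp at h3 h5
        exact List.length_eq_zero_iff.1 (by omega)
      subst has
      rw [List.append_nil] at h1
      subst h1
      obtain ⟨ts', u, hts, H1, H2⟩ := forall₂_snoc_left H'
      rw [← List.append_nil (es ++ [b])]
      refine .opr hr hθ ?_ d'
      rw [hts]
      exact forall₂_snoc (forall₂_trans' hP H H1) H2
  · intro r hr θ hθ es as t H _ ih s d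
    replace H := H.imp fun _ _ h => h.1
    have := ih s d
    rw [← applyList_snoc] at this ⊢
    rw [List.append_assoc]
    exact .opr hr hθ H this

theorem Deriv.app_right (hP : WFProg P) {a b u s : Exp σ} (d : Deriv P b u)
    (d' : Deriv P (.app a u) s) : Deriv P (.app a b) s := by
  refine Deriv.ind (M := fun e s => ∀ a, e = .app a u → Deriv P (.app a b) s)
    ?_ ?_ ?_ ?_ d' a rfl
  · intro e a _; exact .bot _
  · intro x a h; cases h
  · intro h es ts hs hp H a h0
    obtain ⟨es, rfl, rfl⟩ := applyList_eq_app hs h0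
    obtain ⟨ts, v, rfl, H1, H2⟩ := forall₂_snoc_left (H.imp fun _ _ h => h.1)
    rw [← applyList_snoc (b := b)]
    exact .dc hs hp (forall₂_snoc H1 (d.trans hP H2))
  · intro r hr θ hθ es as s H d' ih a h0
    replace H := H.imp fun _ _ h => h.1
    obtain ⟨cs, h1, rfl⟩ := applyList_eq_app (h := .fn r.fn) trivial h0
    rw [← applyList_snoc]
    rcases List.eq_nil_or_concat as with rfl | ⟨as, c, rfl⟩
    · rw [List.append_nil] at h1
      subst h1
      obtain ⟨ts, v, hts, H1, H2⟩ := forall₂_snoc_left H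
      rw [← List.append_nil (cs ++ [b])]
      refine .opr hr hθ ?_ d'
      rw [hts]
      exact forall₂_snoc H1 (d.trans hP H2)
    · rw [List.concat_eq_append, ← List.append_assoc] at h1
      obtain ⟨rfl, h3⟩ := List.append_inj' h1 rfl
      cases h3
      rw [List.append_assoc]
      refine .opr hr hθ H ?_
      rw [applyList_snoc]
      exact ih _ (by simp)

/-- The denotation of an application is monotone in the denotations of its components. -/
theorem den_app_mono (hP : WFProg P) {a a' b b' : Exp σ} (ha : den P a ⊆ den P a')
    (hb : den P b ⊆ den P b') : den P (.app a b) ⊆ den P (.app a' b') := by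
  intro s hs
  rw [mem_den] at hs ⊢
  obtain ⟨t, u, ht, hu, d⟩ := hs.app_split hP
  exact .app_left hP (mem_den.1 (ha (mem_den.2 ht)))
    (.app_right hP (mem_den.1 (hb (mem_den.2 hu))) d)

theorem den_fill (hP : WFProg P) {e e' : Exp σ} (h : den P e ⊆ den P e') (C : Cntxt σ) :
    den P (C.fill e) ⊆ den P (C.fill e') := by
  induction C with
  | hole => exact h
  | appL C a ih => exact den_app_mono hP ih subset_rfl
  | appR a C ih => exact den_app_mono hP subset_rfl ih

end Calculus

/-! ### Conservativity of safe extensions -/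

section Extension

variable {τ : Sig} (ι : SigHom σ τ)

theorem mapExp_inj : Function.Injective ι.mapExp := by
  intro a b h
  induction a generalizing b with
  | var x => cases b <;> simp_all [SigHom.mapExp]
  | fn f => cases b <;> simp_all [SigHom.mapExp, ι.injF.eq_iff]
  | cn c => cases b <;> simp_all [SigHom.mapExp, ι.injC.eq_iff]
  | bot => cases b <;> simp_all [SigHom.mapExp]
  | app a a' iha iha' =>
    cases b <;> simp only [SigHom.mapExp, Exp.app.injEq, reduceCtorEq] at h
    rw [iha h.1, iha' h.2]

theorem mapExp_applyList (h : Exp σ) (es : List (Exp σ)) :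
    ι.mapExp (applyList h es) = applyList (ι.mapExp h) (es.map ι.mapExp) := by
  induction es using List.reverseRecOn with
  | nil => rfl
  | append_singleton es x ih => simp [SigHom.mapExp, ih]

theorem isSymb_mapExp {h : Exp σ} : IsSymb (ι.mapExp h) ↔ IsSymb h := by
  cases h <;> simp [SigHom.mapExp, IsSymb]

theorem mapExp_subst (θ : ℕ → Exp σ) (e : Exp σ) :
    ι.mapExp (subst θ e) = subst (fun x => ι.mapExp (θ x)) (ι.mapExp e) := by
  induction e <;> simp_all [SigHom.mapExp, subst]

theorem occVars_mapExp (e : Exp σ) : occVars (ι.mapExp e) = occVars e := by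
  induction e <;> simp_all [SigHom.mapExp, occVars]

theorem botFree_mapExp (e : Exp σ) : BotFree (ι.mapExp e) ↔ BotFree e := by
  induction e <;> simp_all [SigHom.mapExp, BotFree]

theorem patAr_mapExp {e : Exp σ} {n : ℕ} : PatAr (ι.mapExp e) n ↔ PatAr e n := by
  induction e generalizing n with
  | var x =>
    constructor <;> (intro h; cases h; exact .var x)
  | bot => constructor <;> (intro h; cases h; exact .bot)
  | cn c =>
    constructor
    · intro h; cases h; rw [ι.arC]; exact .cn c
    · intro h; cases h; rw [← ι.arC]; exact .cn _
  | fn f =>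
    constructor
    · intro h; cases h with | fn _ _ h => exact .fn f n (by rw [h, ι.arF])
    · intro h; cases h with | fn _ _ h => exact .fn _ n (by rw [h, ι.arF])
  | app a b iha ihb =>
    constructor
    · intro h
      cases h with | app _ _ _ m h1 h2 => exact .app _ _ _ m (iha.1 h1) (ihb.1 h2)
    · intro h
      cases h with | app _ _ _ m h1 h2 => exact .app _ _ _ m (iha.2 h1) (ihb.2 h2)

theorem isPPat_mapExp {e : Exp σ} : IsPPat (ι.mapExp e) ↔ IsPPat e := by
  simp only [isPPat_iff, patAr_mapExp]

theorem mapExp_eq_applyList {h : Exp τ} {es : List (Exp τ)} {e : Exp σ}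
    (H : ι.mapExp e = applyList h es) :
    ∃ h₀ es₀, e = applyList h₀ es₀ ∧ ι.mapExp h₀ = h ∧ es = es₀.map ι.mapExp := by
  induction es using List.reverseRecOn generalizing e with
  | nil => exact ⟨e, [], rfl, H, rfl⟩
  | append_singleton es x ih =>
    rw [applyList_snoc] at H
    cases e <;> simp only [SigHom.mapExp, Exp.app.injEq, reduceCtorEq] at H
    obtain ⟨h₀, es₀, rfl, rfl, rfl⟩ := ih H.1
    exact ⟨h₀, es₀ ++ [_], (applyList_snoc _ _ _).symm, rfl, by simp [H.2]⟩

theorem expFS_applyList {S : Set σ.FS} {h : Exp σ} {es : List (Exp σ)} :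
    expFS (applyList h es) ⊆ S ↔ expFS h ⊆ S ∧ ∀ e ∈ es, expFS e ⊆ S := by
  induction es using List.reverseRecOn with
  | nil => simp
  | append_singleton es x ih =>
    simp only [applyList_snoc, expFS, Set.union_subset_iff, ih, List.mem_append,
      List.mem_singleton, and_assoc]
    constructor
    · rintro ⟨h1, h2, h3⟩
      exact ⟨h1, by rintro e (h | rfl); exacts [h2 e h, h3]⟩
    · rintro ⟨h1, h2⟩
      exact ⟨h1, fun e he => h2 e (.inl he), h2 x (.inr rfl)⟩

theorem expFS_subst {S : Set σ.FS} {θ : ℕ → Exp σ} {e : Exp σ} (h : expFS e ⊆ S)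
    (h' : ∀ x ∈ occVars e, expFS (θ x) ⊆ S) : expFS (subst θ e) ⊆ S := by
  induction e with
  | var x => exact h' x (by simp [occVars])
  | app a b iha ihb =>
    simp only [expFS, Set.union_subset_iff, occVars, List.mem_append, subst] at *
    exact ⟨iha h.1 fun x hx => h' x (.inl hx), ihb h.2 fun x hx => h' x (.inr hx)⟩
  | _ => exact h

theorem expFS_of_occ {θ : ℕ → Exp σ} {e : Exp σ} {x : ℕ} (h : x ∈ occVars e) :
    expFS (θ x) ⊆ expFS (subst θ e) := by
  induction e with
  | var y => simp only [occVars, List.mem_singleton] at h; subst h; exact subset_rfl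
  | app a b iha ihb =>
    simp only [occVars, List.mem_append] at h
    rcases h with h | h
    · exact (iha h).trans Set.subset_union_left
    · exact (ihb h).trans Set.subset_union_right
  | _ => simp [occVars] at h

theorem subst_preimage {θ : ℕ → Exp τ} {p t : Exp σ}
    (h : subst θ (ι.mapExp p) = ι.mapExp t) {x : ℕ} (hx : x ∈ occVars p) :
    ∃ u, θ x = ι.mapExp u := by
  induction p generalizing t with
  | var y => simp only [occVars, List.mem_singleton] at hx; subst hx; exact ⟨t, h⟩
  | app a b iha ihb =>
    cases t <;> simp only [SigHom.mapExp, subst, Exp.app.injEq, reduceCtorEq] at h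
    simp only [occVars, List.mem_append] at hx
    rcases hx with hx | hx
    · exact iha h.1 hx
    · exact ihb h.2 hx
  | _ => simp [occVars] at hx

theorem subst_mapExp_congr {θ : ℕ → Exp τ} {θ₀ : ℕ → Exp σ} {p : Exp σ}
    (h : ∀ x ∈ occVars p, θ x = ι.mapExp (θ₀ x)) :
    subst θ (ι.mapExp p) = ι.mapExp (subst θ₀ p) := by
  induction p with
  | var y => exact h y (by simp [occVars])
  | app a b iha ihb =>
    simp only [SigHom.mapExp, subst]
    rw [iha fun x hx => h x (by simp [occVars, hx]), ihb fun x hx => h x (by simp [occVars, hx])]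
  | _ => rfl

theorem Deriv.map {P : Program σ} {P' : Program τ} (hPP : ι.mapProg P ⊆ P') {e t : Exp σ}
    (d : Deriv P e t) : Deriv P' (ι.mapExp e) (ι.mapExp t) := by
  have aux : ∀ {es ts : List (Exp σ)},
      List.Forall₂ (fun a b => Deriv P a b ∧ Deriv P' (ι.mapExp a) (ι.mapExp b)) es ts →
      List.Forall₂ (Deriv P') (es.map ι.mapExp) (ts.map ι.mapExp) := by
    intro es ts H
    rw [List.forall₂_map_left_iff, List.forall₂_map_right_iff]
    exact H.imp fun _ _ h => h.2
  refine Deriv.ind (M := fun e t => Deriv P' (ι.mapExp e) (ι.mapExp t)) ?_ ?_ ?_ ?_ d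
  · intro e; exact .bot _
  · intro x; exact .rr x
  · intro h es ts hs hp H
    rw [← isPPat_mapExp ι] at hp
    rw [mapExp_applyList] at *
    rw [mapExp_applyList]
    exact .dc ((isSymb_mapExp ι).2 hs) hp (aux H)
  · intro r hr θ hθ es as t H _ ih
    rw [mapExp_applyList, List.map_append]
    refine Deriv.opr (r := ι.mapRule r) (θ := fun x => ι.mapExp (θ x)) (hPP ⟨r, hr, rfl⟩)
      (fun x => (isPPat_mapExp ι).2 (hθ x)) ?_ ?_
    · have := aux H
      simpa [SigHom.mapRule, Function.comp_def, mapExp_subst] using this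
    · rw [mapExp_applyList, mapExp_subst] at ih
      exact ih

/-- Derivations in a safe extension that start from an expression of the original signature come
from derivations in the original program.  Here `S` is a set of function symbols that contains
those of `P` and none defined by the additional rules `P''`. -/
theorem Deriv.reflect {P : Program σ} (hP : WFProg P) {P' P'' : Program τ} {S : Set τ.FS}
    (hP' : P' = ι.mapProg P ∪ P'') (hS : progFS (ι.mapProg P) ⊆ S) (hd : Disjoint (defs P'') S)
    {E T : Exp τ} (d : Deriv P' E T) :
    ∀ e, E = ι.mapExp e → expFS E ⊆ S →
      ∃ t, T = ι.mapExp t ∧ Deriv P e t ∧ expFS T ⊆ S := by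
  have aux : ∀ {es : List (Exp σ)} {ts : List (Exp τ)},
      List.Forall₂ (fun E T => Deriv P' E T ∧ ∀ e, E = ι.mapExp e → expFS E ⊆ S →
        ∃ t, T = ι.mapExp t ∧ Deriv P e t ∧ expFS T ⊆ S) (es.map ι.mapExp) ts →
      (∀ e ∈ es.map ι.mapExp, expFS e ⊆ S) →
      ∃ ts₀ : List (Exp σ), ts = ts₀.map ι.mapExp ∧ List.Forall₂ (Deriv P) es ts₀ ∧
        ∀ t ∈ ts, expFS t ⊆ S := by
    intro es
    induction es with
    | nil => intro ts H _; cases H; exact ⟨[], rfl, .nil, by simp⟩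
    | cons a es ih =>
      intro ts H hF
      simp only [List.map_cons] at H
      cases H with
      | cons h1 h2 =>
        obtain ⟨t, rfl, d, hF1⟩ := h1.2 a rfl (hF _ (by simp))
        obtain ⟨ts, rfl, H, hF2⟩ := ih h2 (fun e he => hF e (by
          rw [List.map_cons]; exact List.mem_cons_of_mem _ he))
        refine ⟨t :: ts, rfl, .cons d H, ?_⟩
        intro u hu
        rcases List.mem_cons.1 hu with rfl | hu
        exacts [hF1, hF2 u hu]
  refine Deriv.ind (M := fun E T => ∀ e, E = ι.mapExp e → expFS E ⊆ S →
      ∃ t, T = ι.mapExp t ∧ Deriv P e t ∧ expFS T ⊆ S) ?_ ?_ ?_ ?_ d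
  · intro E e _ _
    exact ⟨.bot, rfl, .bot e, by simp [expFS]⟩
  · intro x e h hF
    cases e <;> simp only [SigHom.mapExp, Exp.var.injEq, reduceCtorEq] at h
    subst h
    exact ⟨.var x, rfl, .rr x, hF⟩
  · intro h es ts hs hp H e h0 hF
    obtain ⟨h, es, rfl, rfl, rfl⟩ := mapExp_eq_applyList ι h0.symm
    rw [expFS_applyList] at hF
    obtain ⟨ts, rfl, H', hF'⟩ := aux H hF.2
    refine ⟨applyList h ts, (mapExp_applyList ι _ _).symm, ?_, expFS_applyList.2 ⟨hF.1, hF'⟩⟩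
    rw [← mapExp_applyList, isPPat_mapExp] at hp
    exact .dc ((isSymb_mapExp ι).1 hs) hp H'
  · intro r hr θ hθ es as T H _ ih e h0 hF
    obtain ⟨h, cs, rfl, h1, h2⟩ := mapExp_eq_applyList ι h0.symm
    rw [expFS_applyList] at hF
    have hfS : r.fn ∈ S := hF.1 rfl
    have hrP : r ∈ ι.mapProg P := by
      rw [hP'] at hr
      rcases hr with hr | hr
      · exact hr
      · exact (Set.disjoint_left.1 hd ⟨r, hr, rfl⟩ hfS).elim
    obtain ⟨r, hrP0, rfl⟩ := hrP
    obtain ⟨es, as, rfl, rfl, rfl⟩ := List.map_eq_append_iff.1 h2.symm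
    obtain ⟨ts, hts, H', hF'⟩ := aux H fun e he => hF.2 e (by simp only [List.mem_append]; exact .inl he)
    have hh : h = .fn r.fn := mapExp_inj ι h1
    subst hh
    simp only [SigHom.mapRule, List.map_map] at hts hF' ih
    -- The pattern variables are bound to expressions of the original signature.
    have hpre : ∀ x ∈ r.lhs.flatMap occVars, (∃ u, θ x = ι.mapExp u) ∧ expFS (θ x) ⊆ S := by
      intro x hx
      obtain ⟨p, hp, hxp⟩ := List.mem_flatMap.1 hx
      have hmem : (subst θ ∘ ι.mapExp) p ∈ r.lhs.map (subst θ ∘ ι.mapExp) :=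
        List.mem_map_of_mem hp
      have hmem' := hmem
      rw [hts] at hmem'
      obtain ⟨t, -, ht⟩ := List.mem_map.1 hmem'
      refine ⟨subst_preimage ι (p := p) (t := t) ht.symm hxp, ?_⟩
      refine subset_trans (expFS_of_occ ?_) (hF' _ hmem)
      rwa [occVars_mapExp]
    have hex : ∀ x, ∃ u : Exp σ, IsPPat u ∧ (x ∈ r.lhs.flatMap occVars → θ x = ι.mapExp u) := by
      intro x
      by_cases hx : x ∈ r.lhs.flatMap occVars
      · obtain ⟨⟨u, hu⟩, -⟩ := hpre x hx
        exact ⟨u, (isPPat_mapExp ι).1 (hu ▸ hθ x), fun _ => hu⟩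
      · exact ⟨.bot, .bot, fun h => (hx h).elim⟩
    choose θ₀ hθ₀ hθ₀' using hex
    have hne := (hP r hrP0).2
    have hrhs : subst θ (ι.mapExp r.rhs) = ι.mapExp (subst θ₀ r.rhs) :=
      subst_mapExp_congr ι fun x hx => hθ₀' x (hne x hx)
    have hlhs : r.lhs.map (subst θ₀) = ts := by
      apply (List.map_injective_iff.2 (mapExp_inj ι))
      rw [← hts, List.map_map]
      apply List.map_congr_left
      intro p hp
      exact (subst_mapExp_congr ι fun x hx => hθ₀' x (List.mem_flatMap.2 ⟨p, hp, hx⟩)).symm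
    obtain ⟨t, rfl, d, hFt⟩ := ih (applyList (subst θ₀ r.rhs) as)
      (by rw [hrhs, mapExp_applyList]) (by
        rw [expFS_applyList]
        refine ⟨expFS_subst ?_ ?_, fun e he => hF.2 e (by simp only [List.mem_append]; exact .inr he)⟩
        · refine subset_trans ?_ hS
          refine subset_trans ?_ (Set.subset_biUnion_of_mem (u := ruleFS)
            (show ι.mapRule r ∈ ι.mapProg P from ⟨r, hrP0, rfl⟩))
          exact Set.subset_union_right.trans (Set.subset_insert _ _)
        · intro x hx
          rw [occVars_mapExp] at hx
          exact (hpre x (hne x hx)).2)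
    exact ⟨t, rfl, .opr hrP0 hθ₀ (hlhs ▸ H') d, hFt⟩

theorem den_map {P : Program σ} (hP : WFProg P) {P' : Program τ} {e : Exp σ}
    (h : SafeExt (ι.mapProg P) P' (ι.mapExp e)) :
    den P' (ι.mapExp e) = ι.mapExp '' den P e := by
  obtain ⟨P'', rfl, -, hd⟩ := h
  ext T
  simp only [mem_den, Set.mem_image]
  constructor
  · intro d
    obtain ⟨t, rfl, d, -⟩ := d.reflect ι hP rfl Set.subset_union_right hd e rfl
      Set.subset_union_left
    exact ⟨t, d, rfl⟩
  · rintro ⟨t, d, rfl⟩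
    exact d.map ι Set.subset_union_left

theorem mapRule_wf {r : Rule σ} (h : r.WF ∧ r.NoExtra) :
    (ι.mapRule r).WF ∧ (ι.mapRule r).NoExtra := by
  obtain ⟨⟨h1, h2, h3⟩, h4⟩ := h
  have hv : (r.lhs.map ι.mapExp).flatMap occVars = r.lhs.flatMap occVars := by
    rw [List.flatMap_map]
    simp only [occVars_mapExp]
  refine ⟨⟨by simp [SigHom.mapRule, h1, ι.arF], ?_, ?_⟩, ?_⟩
  · intro t ht
    obtain ⟨p, hp, rfl⟩ := List.mem_map.1 ht
    exact ⟨(isPPat_mapExp ι).2 (h2 p hp).1, (botFree_mapExp ι p).2 (h2 p hp).2⟩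
  · simpa only [SigHom.mapRule, hv] using h3
  · intro x hx
    simp only [SigHom.mapRule, hv, occVars_mapExp] at hx ⊢
    exact h4 x hx

theorem expFS_mapExp (e : Exp σ) : expFS (ι.mapExp e) ⊆ Set.range ι.onF := by
  induction e <;> simp_all [SigHom.mapExp, expFS]

theorem progFS_mapProg (P : Program σ) : progFS (ι.mapProg P) ⊆ Set.range ι.onF := by
  refine Set.iUnion₂_subset ?_
  rintro _ ⟨r, -, rfl⟩
  refine Set.insert_subset ⟨r.fn, rfl⟩ (Set.union_subset (Set.iUnion₂_subset ?_)
    (expFS_mapExp ι _))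
  intro t ht
  obtain ⟨p, -, rfl⟩ := List.mem_map.1 ht
  exact expFS_mapExp ι p

end Extension

/-! ### Separating patterns by a fresh rule -/

/-- The leaves of an expression that are variables or `⊥`, from left to right. -/
def leaves : Exp σ → List (Exp σ)
  | .var x => [.var x]
  | .bot => [.bot]
  | .app a b => leaves a ++ leaves b
  | _ => []

/-- Replace the leaves listed by `leaves` by the distinct variables `k, k + 1, …`. -/
def lin : ℕ → Exp σ → Exp σ
  | k, .var _ => .var k
  | k, .bot => .var k
  | k, .app a b => .app (lin k a) (lin (k + (leaves a).length) b)
  | _, .fn f => .fn f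
  | _, .cn c => .cn c

/-- The variables by which `lin k` replaces the variable (not `⊥`) leaves of an expression. -/
def linVars : ℕ → Exp σ → List ℕ
  | k, .var _ => [k]
  | k, .app a b => linVars k a ++ linVars (k + (leaves a).length) b
  | _, _ => []

theorem occVars_lin (k : ℕ) (t : Exp σ) :
    occVars (lin k t) = List.range' k (leaves t).length := by
  induction t generalizing k with
  | app a b iha ihb => simp [lin, occVars, leaves, iha, ihb]
  | _ => simp [lin, occVars, leaves]

theorem linVars_subset (k : ℕ) (t : Exp σ) : ∀ x ∈ linVars k t, x ∈ occVars (lin k t) := by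
  induction t generalizing k with
  | app a b iha ihb =>
    intro x hx
    simp only [linVars, lin, occVars, List.mem_append] at hx ⊢
    exact hx.imp (iha _ x) (ihb _ x)
  | _ => simp [lin, occVars, linVars]

theorem botFree_lin (k : ℕ) (t : Exp σ) : BotFree (lin k t) := by
  induction t generalizing k <;> simp_all [lin, BotFree]

theorem patAr_lin {t : Exp σ} {n : ℕ} (h : PatAr t n) (k : ℕ) : PatAr (lin k t) n := by
  induction h generalizing k with
  | var x => exact .var _
  | bot => exact .var _
  | cn c => exact .cn c
  | fn f n h => exact .fn f n h
  | app a b n m _ _ iha ihb => exact .app _ _ n m (iha _) (ihb _)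

theorem isPPat_lin {t : Exp σ} (h : IsPPat t) (k : ℕ) : IsPPat (lin k t) := by
  obtain ⟨n, h⟩ := isPPat_iff.1 h
  exact isPPat_iff.2 ⟨n, patAr_lin h k⟩

theorem length_linVars (k : ℕ) (t : Exp σ) : (linVars k t).length = (occVars t).length := by
  induction t generalizing k with
  | app a b iha ihb => simp [linVars, occVars, iha, ihb]
  | _ => simp [linVars, occVars]

theorem leaves_isPPat (t : Exp σ) : ∀ u ∈ leaves t, IsPPat u := by
  induction t with
  | var x => simpa [leaves] using IsPPat.var x
  | bot => simpa [leaves] using IsPPat.bot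
  | app a b iha ihb =>
    intro u hu
    exact (List.mem_append.1 hu).elim (iha u) (ihb u)
  | _ => simp [leaves]

/-- Substituting the leaves back undoes `lin`. -/
theorem subst_lin {θ : ℕ → Exp σ} (k : ℕ) (t : Exp σ)
    (h : ∀ i (hi : i < (leaves t).length), θ (k + i) = (leaves t)[i]) :
    subst θ (lin k t) = t ∧ (linVars k t).map θ = (occVars t).map .var := by
  induction t generalizing k with
  | var x => simpa [lin, leaves, subst, linVars, occVars] using h
  | bot => simpa [lin, leaves, subst, linVars, occVars] using h
  | fn f => simp [lin, subst, linVars, occVars]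
  | cn c => simp [lin, subst, linVars, occVars]
  | app a b iha ihb =>
    simp only [leaves, List.length_append] at h
    obtain ⟨h1, h2⟩ := iha k fun i hi => by
      rw [h i (by omega), List.getElem_append_left hi]
    obtain ⟨h3, h4⟩ := ihb (k + (leaves a).length) fun i hi => by
      rw [Nat.add_assoc, h _ (by omega), List.getElem_append_right (by omega)]
      simp
    simp [lin, subst, linVars, occVars, h1, h2, h3, h4]

/-- An instance of `lin k t` that is correct at the variable leaves of `t` is at least as defined
as `t`. -/
theorem den_lin {P : Program σ} (hP : WFProg P) {θ : ℕ → Exp σ} (k : ℕ) (t : Exp σ)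
    (h : (linVars k t).map θ = (occVars t).map .var) :
    den P t ⊆ den P (subst θ (lin k t)) := by
  induction t generalizing k with
  | var x =>
    simp only [linVars, occVars, List.map_cons, List.map_nil, List.cons.injEq, and_true] at h
    simp [lin, subst, h]
  | bot =>
    intro s hs
    rw [mem_den] at hs ⊢
    rw [hs.eq_bot]
    exact .bot _
  | fn f => exact subset_rfl
  | cn c => exact subset_rfl
  | app a b iha ihb =>
    simp only [linVars, occVars, List.map_append] at h
    obtain ⟨h1, h2⟩ := List.append_inj h (by simp [length_linVars])
    exact den_app_mono hP (iha _ h1) (ihb _ h2)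

theorem subst_applyList (θ : ℕ → Exp σ) (h : Exp σ) (es : List (Exp σ)) :
    subst θ (applyList h es) = applyList (subst θ h) (es.map (subst θ)) := by
  induction es using List.reverseRecOn with
  | nil => rfl
  | append_singleton es x ih => simp [subst, ih]

theorem occVars_applyList {h : Exp σ} (hh : occVars h = []) (es : List (Exp σ)) :
    occVars (applyList h es) = es.flatMap occVars := by
  induction es using List.reverseRecOn with
  | nil => simpa using hh
  | append_singleton es x ih => simp [occVars, ih]

theorem botFree_applyList {h : Exp σ} (hh : BotFree h) {es : List (Exp σ)}
    (H : ∀ e ∈ es, BotFree e) : BotFree (applyList h es) := by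
  induction es using List.reverseRecOn with
  | nil => simpa using hh
  | append_singleton es x ih =>
    rw [applyList_snoc]
    exact ⟨ih fun e he => H e (by simp [he]), H x (by simp)⟩

theorem pat_to_var {P : Program σ} (hP : WFProg P) {u : Exp σ} (hu : IsPPat u) {x : ℕ}
    (d : Deriv P u (.var x)) : u = .var x := by
  rcases d.inv with h | ⟨y, rfl, h⟩ | ⟨h, es, ts, h0, h1, hs, hp, H⟩ |
    ⟨r, hr, θ, es, as, rfl, hθ, H, -⟩
  · cases h
  · exact h.symm
  · exact absurd h1.symm (applyList_ne_var hs x)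
  · exact (not_redex hP hr H hu).elim

/-- The signature `σ` with a fresh function symbol of arity 1 and a fresh constructor of
arity `n`. -/
def extSig (σ : Sig) (n : ℕ) : Sig where
  FS := Option σ.FS
  CS := Option σ.CS
  arityF f := f.elim 1 σ.arityF
  arityC c := c.elim n σ.arityC

/-- The inclusion of `σ` into `extSig σ n`. -/
def extHom (σ : Sig) (n : ℕ) : SigHom σ (extSig σ n) where
  onF := some
  onC := some
  injF := Option.some_injective _
  injC := Option.some_injective _
  arF _ := rfl
  arC _ := rfl

/-- The rule `f t' → d y₁ … yₙ` for the fresh symbols `f` and `d`, where `t'` is `t` with its leaves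
renamed apart and the `yᵢ` are the new names of the variable leaves. -/
def sepRule {n : ℕ} (t : Exp (extSig σ n)) : Rule (extSig σ n) where
  fn := none
  lhs := [lin 0 t]
  rhs := applyList (.cn none) ((linVars 0 t).map .var)

/-- The total pattern `d x₁ … xₙ` listing the variable occurrences of `t`. -/
def sepObs {n : ℕ} (t : Exp (extSig σ n)) : Exp (extSig σ n) :=
  applyList (.cn none) ((occVars t).map .var)

theorem sepRule_wf {n : ℕ} {t : Exp (extSig σ n)} (ht : IsPPat t) :
    (sepRule t).WF ∧ (sepRule t).NoExtra := by
  refine ⟨⟨rfl, ?_, ?_⟩, ?_⟩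
  · intro p hp
    obtain rfl := List.mem_singleton.1 hp
    exact ⟨isPPat_lin ht 0, botFree_lin 0 t⟩
  · simp [sepRule, occVars_lin, List.nodup_range']
  · intro x hx
    simp only [sepRule] at hx
    rw [occVars_applyList rfl] at hx
    simp only [sepRule, List.flatMap_cons, List.flatMap_nil, List.append_nil]
    obtain ⟨v, hv, hx⟩ := List.mem_flatMap.1 hx
    obtain ⟨y, hy, rfl⟩ := List.mem_map.1 hv
    obtain rfl := List.mem_singleton.1 hx
    exact linVars_subset 0 t _ hy

theorem sepObs_isPPat {n : ℕ} {t : Exp (extSig σ n)} (h : (occVars t).length = n) :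
    IsPPat (sepObs t) := by
  refine .capp _ _ (by simpa [extSig] using h.le) ?_
  intro u hu
  obtain ⟨x, -, rfl⟩ := List.mem_map.1 hu
  exact .var x

/-- If `e ⇒ t`, then `f e` evaluates to `sepObs t`. -/
theorem sepObs_of_deriv {n : ℕ} {t e : Exp (extSig σ n)} {P : Program (extSig σ n)}
    (h : (occVars t).length = n) (hr : sepRule t ∈ P) (d : Deriv P e t) :
    Deriv P (.app (.fn none) e) (sepObs t) := by
  let θ : ℕ → Exp (extSig σ n) := fun x => (leaves t).getD x .bot
  have hθ : PSub θ := by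
    intro x
    by_cases hx : x < (leaves t).length
    · simp only [θ, List.getD_eq_getElem _ _ hx]
      exact leaves_isPPat t _ (List.getElem_mem hx)
    · simp only [θ, List.getD_eq_default _ _ (not_lt.1 hx)]
      exact .bot
  obtain ⟨h1, h2⟩ := subst_lin (θ := θ) 0 t fun i hi => by
    simp only [θ, zero_add, List.getD_eq_getElem _ _ hi]
  have h3 : subst θ (sepRule t).rhs = sepObs t := by
    simp only [sepRule, sepObs, subst_applyList, List.map_map]
    rw [← h2]
    rfl
  refine Deriv.opr (r := sepRule t) (θ := θ) (es := [e]) (as := []) hr hθ ?_ ?_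
  · simp only [sepRule, List.map_cons, List.map_nil, h1]
    exact .cons d .nil
  · rw [h3]
    exact .refl (sepObs_isPPat h)

/-- If `f e` evaluates to `sepObs t`, then `e ⇒ t`, provided the fresh rule is the only rule
for `f`. -/
theorem deriv_of_sepObs {n : ℕ} {t e : Exp (extSig σ n)} {P : Program (extSig σ n)}
    (hP : WFProg P) (ht : IsPPat t) (hu : ∀ r ∈ P, r.fn = none → r = sepRule t)
    (d : Deriv P (.app (.fn none) e) (sepObs t)) : Deriv P e t := by
  have hcn : IsSymb (Exp.cn none : Exp (extSig σ n)) := trivial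
  have hfn : IsSymb (Exp.fn none : Exp (extSig σ n)) := trivial
  have h00 : (Exp.app (.fn none) e : Exp (extSig σ n)) = applyList (.fn none) [e] := rfl
  rw [h00] at d
  rcases d.inv with h | ⟨x, h, -⟩ | ⟨h, es, ts, h0, h1, hs, hp, H⟩ |
    ⟨r, hr, θ, es, as, h0, hθ, H, d'⟩
  · cases (applyList_inj hcn (h' := .bot) (es' := []) trivial h).1
  · cases h
  · have h2 := (applyList_inj hfn hs h0).1
    have h3 := (applyList_inj hcn hs h1).1
    rw [← h2] at h3
    cases h3
  · obtain ⟨h1, h2⟩ := applyList_inj hfn (h' := .fn r.fn) trivial h0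
    obtain rfl := hu r hr (Exp.fn.inj h1).symm
    simp only [sepRule, List.map_cons, List.map_nil] at H
    cases H with
    | cons h3 h4 =>
      cases h4
      simp only [List.cons_append, List.nil_append, List.cons.injEq] at h2
      obtain ⟨rfl, rfl⟩ := h2
      refine h3.trans hP (mem_den.1 (den_lin hP 0 t ?_ (mem_den.2 (.refl ht))))
      have h5 : subst θ (sepRule t).rhs = applyList (.cn none) ((linVars 0 t).map θ) := by
        simp only [sepRule, subst_applyList, List.map_map]
        rfl
      rw [applyList_nil, h5] at d'
      rcases d'.inv with h | ⟨x, h, -⟩ | ⟨h, es, ts, h6, h7, hs, hp, H⟩ |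
        ⟨r, hr, θ', es, as, h6, -⟩
      · cases (applyList_inj hcn (h' := .bot) (es' := []) trivial h).1
      · exact absurd h (applyList_ne_var hcn x)
      · obtain ⟨-, rfl⟩ := applyList_inj hcn hs h6
        obtain ⟨-, rfl⟩ := applyList_inj hcn hs h7
        rw [List.forall₂_map_left_iff, List.forall₂_map_right_iff] at H
        have H' := H.imp fun y x h => pat_to_var hP (hθ y) h
        rw [← List.forall₂_eq_eq_eq, List.forall₂_map_left_iff, List.forall₂_map_right_iff]
        exact H'
      · cases (applyList_inj hcn (h' := .fn r.fn) trivial h6).1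

theorem den_subset_of_obs (P : Program σ) (hP : WFProg P) (e e' : Exp σ)
    (H : ∀ (τ : Sig) (ι : SigHom σ τ) (P' : Program τ), WFProg P' →
        SafeExt (ι.mapProg P) P' (ι.mapExp e) →
        SafeExt (ι.mapProg P) P' (ι.mapExp e') →
        ∀ C : Cntxt τ,
          Obs P' (C.fill (ι.mapExp e)) ⊆ Obs P' (C.fill (ι.mapExp e'))) :
    den P e ⊆ den P e' := by
  intro t ht
  rw [mem_den] at ht
  let n := (occVars t).length
  let ι := extHom σ n
  let t₁ := ι.mapExp t
  have hn : (occVars t₁).length = n := by rw [occVars_mapExp]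
  have ht₁ : IsPPat t₁ := (isPPat_mapExp ι).2 ht.isPPat
  let P' : Program (extSig σ n) := ι.mapProg P ∪ {sepRule t₁}
  have hWF : WFProg P' := by
    rintro r (⟨r, hr, rfl⟩ | rfl)
    · exact mapRule_wf ι (hP r hr)
    · exact sepRule_wf ht₁
  have hfresh : ∀ r ∈ ι.mapProg P, r.fn ≠ none := by
    rintro _ ⟨r, -, rfl⟩ h
    cases h
  have hext : ∀ a : Exp σ, SafeExt (ι.mapProg P) P' (ι.mapExp a) := by
    refine fun a => ⟨{sepRule t₁}, rfl, ?_, ?_⟩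
    · rw [Set.disjoint_singleton_right]
      exact fun h => hfresh _ h rfl
    · rw [Set.disjoint_left]
      rintro f ⟨r, rfl, rfl⟩ hf
      obtain ⟨g, hg⟩ := Set.union_subset (expFS_mapExp ι a) (progFS_mapProg ι P) hf
      cases hg
  have hobs : sepObs t₁ ∈ Obs P' ((Cntxt.appR (.fn none) .hole).fill (ι.mapExp e)) := by
    refine ⟨mem_den.2 (sepObs_of_deriv hn (.inr rfl) (ht.map ι Set.subset_union_left)), ?_⟩
    refine botFree_applyList (h := (.cn none : Exp (extSig σ n))) trivial ?_
    intro u hu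
    obtain ⟨x, -, rfl⟩ := List.mem_map.1 hu
    trivial
  have hobs' := mem_den.1 (H _ ι P' hWF (hext e) (hext e') _ hobs).1
  have d : Deriv P' (ι.mapExp e') t₁ := by
    refine deriv_of_sepObs hWF ht₁ ?_ hobs'
    rintro r (hr | hr) h
    · exact (hfresh r hr h).elim
    · exact hr
  have hm : t₁ ∈ ι.mapExp '' den P e' := den_map ι hP (hext e') ▸ mem_den.2 d
  exact (mapExp_inj ι).mem_set_image.1 hm

/-- **Theorem 2 (full abstraction wrt `Obs`)**: for a program `P` without extra
variables and total expressions `e, e'`, `⟦e⟧^P = ⟦e'⟧^P` iff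
`Obs^{P'}(C[e]) = Obs^{P'}(C[e'])` for every program `P'` (over any extension
of the signature) safely extending both `(P, e)` and `(P, e')` and every
context `C` built with the signature of `P'`. -/
theorem full_abstraction_Obs (σ : Sig) (P : Program σ) (hP : WFProg P)
    (e e' : Exp σ) (he : BotFree e) (he' : BotFree e') :
    den P e = den P e' ↔
      ∀ (τ : Sig) (ι : SigHom σ τ) (P' : Program τ), WFProg P' →
        SafeExt (ι.mapProg P) P' (ι.mapExp e) →
        SafeExt (ι.mapProg P) P' (ι.mapExp e') →
        ∀ C : Cntxt τ,
          Obs P' (C.fill (ι.mapExp e)) = Obs P' (C.fill (ι.mapExp e')) := by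
  constructor
  · intro h τ ι P' hP' hs hs' C
    have h1 : den P' (ι.mapExp e) = den P' (ι.mapExp e') := by
      rw [den_map ι hP hs, den_map ι hP hs', h]
    have h2 : den P' (C.fill (ι.mapExp e)) = den P' (C.fill (ι.mapExp e')) :=
      (den_fill hP' h1.subset C).antisymm (den_fill hP' h1.symm.subset C)
    simp only [Obs, h2]
  · intro h
    exact (den_subset_of_obs P hP e e'
        fun τ ι P' h1 h2 h3 C => (h τ ι P' h1 h2 h3 C).subset).antisymm
      (den_subset_of_obs P hP e' e
        fun τ ι P' h1 h2 h3 C => (h τ ι P' h1 h3 h2 C).symm.subset)
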